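/- arXiv:math/0605126 — 2 statements merged into one kernel-verified Lean document; each statement's English description precedes it below -/
import Mathlib

section
/- Let q be a prime power, V an n-dimensional vector space over the finite field 𝔽_q, K a field of characteristic zero, and t ∈ K. Then ∑_{U ≤ V} μ(U, ⊤)·t^{finrank U} = ∏_{i=0}^{n−1} (t − q^i), where the sum runs over all 𝔽_q-subspaces U of V and μ is the Möbius function of the lattice of subspaces of V. -/
open Module

open Polynomial in
theorem Polynomial.eq_of_forall_ge_eval_natCast_pow_eq {K : Type*} [Field K] [CharZero K]
    {q : ℕ} (hq : 1 < q) {P Q : K[X]} (n : ℕ)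
    (h : ∀ m, n ≤ m → P.eval ((q : K) ^ m) = Q.eval ((q : K) ^ m)) : P = Q := by
  have hinj : Function.Injective fun m : ℕ ↦ (q : K) ^ m := by
    intro a b hab
    dsimp only at hab
    exact Nat.pow_right_injective hq (mod_cast hab : q ^ a = q ^ b)
  refine eq_of_infinite_eval_eq P Q (((Set.Ici_infinite n).image hinj.injOn).mono ?_)
  rintro _ ⟨m, hm, rfl⟩
  exact h m hm

/-- The rows of a matrix span the whole space iff its columns are linearly independent. -/
theorem Matrix.span_range_row_eq_top_iff_linearIndependent_col {F m n : Type*} [Field F]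
    [Fintype m] [Fintype n] (A : Matrix m n F) :
    Submodule.span F (Set.range A.row) = ⊤ ↔ LinearIndependent F A.col := by
  rw [linearIndependent_iff_card_eq_finrank_span, Set.finrank, ← A.rank_eq_finrank_span_cols,
    A.rank_eq_finrank_span_row, ← finrank_fintype_fun_eq_card F (η := n)]
  exact ⟨fun h ↦ by rw [h, finrank_top], fun h ↦ Submodule.eq_top_of_finrank_eq h.symm⟩

section FiniteField

variable {F V : Type*} [Field F] [Fintype F] [AddCommGroup V] [Module F V]
  [FiniteDimensional F V]

/-- The number of spanning `m`-tuples in a finite-dimensional vector space over a finite field. -/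
theorem card_span_range_eq_top {m : ℕ} (hm : finrank F V ≤ m) :
    Nat.card {v : Fin m → V // Submodule.span F (Set.range v) = ⊤} =
      ∏ i : Fin (finrank F V), (Fintype.card F ^ m - Fintype.card F ^ (i : ℕ)) := by
  have hcard := card_linearIndependent (K := F) (V := Fin m → F) (k := finrank F V) (by simpa)
  rw [finrank_fin_fun] at hcard
  rw [← hcard]
  let e := (finBasis F V).equivFun
  refine Nat.card_congr (Equiv.subtypeEquiv
    ((Equiv.arrowCongr (Equiv.refl (Fin m)) e.toEquiv).trans (Equiv.piComm _)) fun v ↦ ?_)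
  have hspan := Matrix.span_range_row_eq_top_iff_linearIndependent_col
    (Matrix.of fun i ↦ e (v i))
  refine Iff.trans ?_ hspan
  have hrow : Set.range (Matrix.of fun i ↦ e (v i)).row = e.toLinearMap '' Set.range v := by
    rw [← Set.range_comp]
    rfl
  rw [hrow, Submodule.span_image]
  exact (Submodule.map_eq_top_iff (e := e)).symm

/-- The `m`-tuples in a subspace `U`, sorted by the subspace they span. -/
theorem sum_Iic_card_span_range_eq [DecidableEq (Submodule F V)]
    [LocallyFiniteOrder (Submodule F V)] (m : ℕ) (U : Submodule F V) :
    ∑ W ∈ Finset.Iic U, Nat.card {v : Fin m → V // Submodule.span F (Set.range v) = W} =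
      (Fintype.card F ^ m) ^ finrank F U := by
  classical
  have : Finite V := Module.finite_of_finite F
  have := Fintype.ofFinite V
  have hU : Fintype.card (Fin m → U) = (Fintype.card F ^ m) ^ finrank F U := by
    rw [Fintype.card_fun, Module.card_eq_pow_finrank (K := F), Fintype.card_fin, pow_right_comm]
  have hle (v : Fin m → V) : Submodule.span F (Set.range v) ≤ U ↔ ∀ i, v i ∈ U := by
    rw [Submodule.span_le, Set.range_subset_iff]
    rfl
  rw [← hU, ← Fintype.card_congr (Equiv.subtypePiEquivPi (p := fun (_ : Fin m) x ↦ x ∈ U)),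
    Fintype.card_subtype, Finset.card_eq_sum_card_fiberwise
      (f := fun v ↦ Submodule.span F (Set.range v)) (t := Finset.Iic U)]
  · refine Finset.sum_congr rfl fun W hW ↦ ?_
    rw [Nat.card_eq_fintype_card, Fintype.card_subtype, Finset.filter_filter]
    congr 1
    ext v
    simp only [Finset.mem_filter, Finset.mem_univ, true_and, ← hle]
    exact ⟨fun h ↦ ⟨h.trans_le (Finset.mem_Iic.mp hW), h⟩, fun h ↦ h.2⟩
  · intro v hv
    simpa [← hle] using hv

/-- The characteristic polynomial of the subspace lattice at `q ^ m` counts the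
spanning `m`-tuples. -/
theorem sum_mu_top_mul_card_pow [Fintype (Submodule F V)] [DecidableEq (Submodule F V)]
    [LocallyFiniteOrder (Submodule F V)] (m : ℕ) :
    ∑ U : Submodule F V, IncidenceAlgebra.mu ℤ U ⊤ *
        ((Fintype.card F : ℤ) ^ m) ^ finrank F U =
      Nat.card {v : Fin m → V // Submodule.span F (Set.range v) = ⊤} := by
  rw [IncidenceAlgebra.moebius_inversion_bot (𝕜 := ℤ)
    (fun W ↦ (Nat.card {v : Fin m → V // Submodule.span F (Set.range v) = W} : ℤ))
    (fun U ↦ ((Fintype.card F : ℤ) ^ m) ^ finrank F U)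
    (fun U ↦ by exact_mod_cast (sum_Iic_card_span_range_eq m U).symm) ⊤]
  exact Finset.sum_congr (by ext; simp) fun _ _ ↦ rfl

end FiniteField

/-- For an `n`-dimensional vector space `V` over the finite field `F = 𝔽_q` (`q` a prime
power), a field `K` of characteristic zero and `t ∈ K`, the characteristic polynomial of
the subspace lattice factorizes:
`∑_{U ≤ V} μ(U, ⊤) · t ^ (dim U) = ∏_{i = 0}^{n-1} (t - q^i)`. -/
theorem subspace_lattice_char_poly (q : ℕ) (hq : IsPrimePow q)
    (F : Type*) [Field F] [Fintype F] (hFq : Fintype.card F = q)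
    (V : Type*) [AddCommGroup V] [Module F V] [FiniteDimensional F V]
    (n : ℕ) (hV : finrank F V = n)
    [Fintype (Submodule F V)] [DecidableEq (Submodule F V)]
    [LocallyFiniteOrder (Submodule F V)]
    (K : Type*) [Field K] [CharZero K] (t : K) :
    ∑ U : Submodule F V,
        ((IncidenceAlgebra.mu ℤ U (⊤ : Submodule F V) : ℤ) : K) * t ^ finrank F U =
      ∏ i ∈ Finset.range n, (t - (q : K) ^ i) := by
  subst hFq hV
  have hcard : 1 < Fintype.card F := hq.one_lt
  suffices h : ∑ U : Submodule F V, Polynomial.C ((IncidenceAlgebra.mu ℤ U ⊤ : ℤ) : K) *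
        Polynomial.X ^ finrank F U =
      ∏ i ∈ Finset.range (finrank F V),
        (Polynomial.X - Polynomial.C ((Fintype.card F : K) ^ i)) by
    simpa [Polynomial.eval_finsetSum, Polynomial.eval_prod] using congrArg (Polynomial.eval t) h
  refine Polynomial.eq_of_forall_ge_eval_natCast_pow_eq hcard (finrank F V) fun m hm ↦ ?_
  have hsum := congrArg (Int.cast : ℤ → K) (sum_mu_top_mul_card_pow (F := F) (V := V) m)
  rw [card_span_range_eq_top hm] at hsum
  simp only [Polynomial.eval_finsetSum, Polynomial.eval_prod, Polynomial.eval_mul,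
    Polynomial.eval_sub, Polynomial.eval_pow, Polynomial.eval_C, Polynomial.eval_X]
  push_cast at hsum
  rw [hsum, ← Fin.prod_univ_eq_prod_range
    (fun i ↦ (Fintype.card F : K) ^ m - (Fintype.card F : K) ^ i)]
  refine Finset.prod_congr rfl fun i _ ↦ ?_
  rw [Nat.cast_sub (Nat.pow_le_pow_right hcard.le (i.isLt.le.trans hm))]
  push_cast
  rfl
end

section
/- Let p be a prime, G a finite abelian p-group, K a field of characteristic zero, and t ∈ K with t ≠ 0 and t ≠ p^i (cast into K) for every natural number i. Then the matrix, indexed by pairs of subgroups (A, B) of G, with (A,B)-entry t^{ℓ(A ⊓ B)} where ℓ(H) is the natural number with Nat.card H = p^{ℓ(H)}, has nonzero determinant. -/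
open Polynomial

/-- The `n`-tuples generating the group `A`. -/
abbrev GeneratingTuple (A : Type*) [Group A] (n : ℕ) : Type _ :=
  {x : Fin n → A // Subgroup.closure (Set.range x) = ⊤}

section Lifts

variable {A B : Type*} [CommGroup A] [CommGroup B]

/-- The homomorphic sections of `π`. -/
abbrev HomSection (π : A →* B) : Type _ := {s : B →* A // ∀ b, π (s b) = b}

/-- A homomorphic section, if there is one, identifies all of them with `B →* ker π`. -/
def homSectionEquiv (π : A →* B) (s₀ : HomSection π) : HomSection π ≃ (B →* π.ker) where
  toFun s := (s.1 / s₀.1).codRestrict π.ker (fun b => by simp [MonoidHom.mem_ker, s.2, s₀.2])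
  invFun f := ⟨s₀.1 * π.ker.subtype.comp f, fun b => by
    have : π (f b : A) = 1 := (f b).2
    simp [s₀.2, this]⟩
  left_inv s := by ext b; exact mul_div_cancel (s₀.1 b) (s.1 b)
  right_inv f := by ext b; simp

theorem card_homSection {p : ℕ} (hp : p.Prime) [Finite A] [Finite B] (π : A →* B)
    (hN : Nat.card π.ker = p) :
    Nat.card (HomSection π) = 0 ∨ ∃ k, Nat.card (HomSection π) = p ^ k := by
  have := Fact.mk hp
  rcases isEmpty_or_nonempty (HomSection π) with h | ⟨⟨s₀⟩⟩
  · exact .inl Nat.card_of_isEmpty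
  · right
    rw [Nat.card_congr (homSectionEquiv π s₀)]
    have : Finite (B →* π.ker) := Finite.of_injective _ DFunLike.coe_injective
    refine IsPGroup.iff_card.mp fun f => ⟨1, ?_⟩
    ext b
    have : f b ^ p = 1 := by rw [← hN]; exact pow_card_eq_one'
    simpa using congrArg Subtype.val this

theorem closure_range_comp {n : ℕ} (π : A →* B) (y : Fin n → A) :
    Subgroup.closure (Set.range (π ∘ y)) = (Subgroup.closure (Set.range y)).map π := by
  rw [MonoidHom.map_closure, Set.range_comp]

/-- Tuples in `A` with generating image are generating tuples of `B` together with a tuple of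
kernel elements. -/
noncomputable def liftEquiv (π : A →* B) (hπ : Function.Surjective π) (n : ℕ) :
    {y : Fin n → A // Subgroup.closure (Set.range (π ∘ y)) = ⊤} ≃
      GeneratingTuple B n × (Fin n → π.ker) where
  toFun y := ⟨⟨π ∘ y.1, y.2⟩, fun i => ⟨y.1 i / Function.surjInv hπ (π (y.1 i)), by
    simp [MonoidHom.mem_ker, Function.surjInv_eq hπ]⟩⟩
  invFun z := ⟨fun i => z.2 i * Function.surjInv hπ (z.1.1 i), by
    have h : (π ∘ fun i => (z.2 i : A) * Function.surjInv hπ (z.1.1 i)) = z.1.1 := by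
      ext i
      have : π (z.2 i : A) = 1 := (z.2 i).2
      simp [this, Function.surjInv_eq hπ]
    rw [h]; exact z.1.2⟩
  left_inv y := by ext i; simp
  right_inv z := by
    have h (i) : π (z.2 i : A) = 1 := (z.2 i).2
    ext i <;> simp [h, Function.surjInv_eq hπ]

theorem bijective_comp_subtype_of_map_eq_top {p : ℕ} (hp : p.Prime) (π : A →* B)
    (hN : Nat.card π.ker = p) {C : Subgroup A} (hC : C.map π = ⊤) (hCtop : C ≠ ⊤) :
    Function.Bijective (π.comp C.subtype) := by
  have := Fact.mk hp
  constructor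
  · rw [injective_iff_map_eq_one]
    rintro ⟨c, hc⟩ h
    by_contra hne
    have hcne : c ≠ 1 := fun h' => hne (by ext; exact h')
    apply hCtop
    have hker : π.ker ≤ C := by
      intro k hk
      obtain ⟨m, hm⟩ := mem_zpowers_of_prime_card (g := (⟨c, h⟩ : π.ker)) (g' := ⟨k, hk⟩) hN
        (fun h' => hcne (congrArg Subtype.val h'))
      have : c ^ m = k := by simpa using congrArg Subtype.val hm
      exact this ▸ C.zpow_mem hc m
    rw [eq_top_iff]
    intro a _
    obtain ⟨c', hc', h'⟩ : π a ∈ C.map π := hC ▸ Subgroup.mem_top _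
    have : a / c' ∈ C := hker (by simp [MonoidHom.mem_ker, h'])
    simpa using C.mul_mem this hc'
  · intro b
    obtain ⟨c, hc, h⟩ : b ∈ C.map π := hC ▸ Subgroup.mem_top _
    exact ⟨⟨c, hc⟩, h⟩

/-- Composing a generating tuple of `B` with a section of `π` gives precisely the non-generating
lifts. -/
theorem card_nongenerating_lifts {p : ℕ} (hp : p.Prime) (π : A →* B)
    (hN : Nat.card π.ker = p) (n : ℕ) :
    Nat.card {y : Fin n → A // Subgroup.closure (Set.range (π ∘ y)) = ⊤ ∧
      Subgroup.closure (Set.range y) ≠ ⊤} =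
      Nat.card (GeneratingTuple B n) * Nat.card (HomSection π) := by
  rw [← Nat.card_prod]
  symm
  have hcomp (x : Fin n → B) (s : HomSection π) : π ∘ (s.1 ∘ x) = x := by ext i; simp [s.2]
  refine Nat.card_congr (Equiv.ofBijective (fun z => ⟨z.2.1 ∘ z.1.1, ?_, ?_⟩) ⟨?_, ?_⟩)
  · rw [hcomp]; exact z.1.2
  · intro h
    rw [closure_range_comp, z.1.2, ← MonoidHom.range_eq_map, MonoidHom.range_eq_top] at h
    have hinj : Function.Injective π := by
      intro a a' haa
      obtain ⟨b, rfl⟩ := h a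
      obtain ⟨b', rfl⟩ := h a'
      rw [z.2.2, z.2.2] at haa
      rw [haa]
    rw [(MonoidHom.ker_eq_bot_iff π).mpr hinj, Subgroup.card_bot] at hN
    exact hp.one_lt.ne hN
  · rintro ⟨x, s⟩ ⟨x', s'⟩ h
    have h : s.1 ∘ x.1 = s'.1 ∘ x'.1 := congrArg Subtype.val h
    have hx : x = x' := by
      ext1
      rw [← hcomp x.1 s, ← hcomp x'.1 s', h]
    subst hx
    have hs : s = s' := by
      ext1
      refine MonoidHom.eq_of_eqOn_dense x.2 ?_
      rintro _ ⟨i, rfl⟩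
      exact congrFun h i
    rw [hs]
  · rintro ⟨y, hy, hy'⟩
    have hbij := bijective_comp_subtype_of_map_eq_top hp π hN (closure_range_comp π y ▸ hy) hy'
    let e := MulEquiv.ofBijective _ hbij
    refine ⟨⟨⟨π ∘ y, hy⟩, ⟨(Subgroup.subtype _).comp e.symm.toMonoidHom, fun b => ?_⟩⟩, ?_⟩
    · exact e.apply_symm_apply b
    · ext i
      exact congrArg Subtype.val
        (e.symm_apply_apply ⟨y i, Subgroup.subset_closure (Set.mem_range_self i)⟩)

theorem card_generatingTuple_add [Finite A] [Finite B] {p : ℕ} (hp : p.Prime) (π : A →* B)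
    (hπ : Function.Surjective π) (hN : Nat.card π.ker = p) (n : ℕ) :
    Nat.card (GeneratingTuple A n) + Nat.card (GeneratingTuple B n) * Nat.card (HomSection π) =
      Nat.card (GeneratingTuple B n) * p ^ n := by
  classical
  have hlift := Nat.card_congr (liftEquiv π hπ n)
  rw [Nat.card_prod, Nat.card_fun, Nat.card_fin, hN] at hlift
  rw [← hlift, ← card_nongenerating_lifts hp π hN n, ← Nat.card_sum]
  have hgen (y : Fin n → A) (hy : Subgroup.closure (Set.range y) = ⊤) :
      Subgroup.closure (Set.range (π ∘ y)) = ⊤ := by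
    rw [closure_range_comp, hy, ← MonoidHom.range_eq_map, MonoidHom.range_eq_top]
    exact hπ
  refine Nat.card_congr (Equiv.trans (Equiv.sumCongr ?_ ?_) (Equiv.sumCompl
    fun y : {y : Fin n → A // Subgroup.closure (Set.range (π ∘ y)) = ⊤} =>
      Subgroup.closure (Set.range y.1) = ⊤))
  · exact (Equiv.subtypeSubtypeEquivSubtype fun {y} hy => hgen y hy).symm
  · exact (Equiv.subtypeSubtypeEquivSubtypeInter _ _).symm

end Lifts

/-- The number of generating `n`-tuples of a finite abelian `p`-group is the value at `p ^ n` of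
a polynomial whose roots are among `0` and the powers of `p`. -/
theorem exists_polynomial_card_generatingTuple {p : ℕ} (hp : p.Prime) (K : Type*) [Field K]
    (A : Type*) [CommGroup A] [Finite A] (hA : IsPGroup p A) :
    ∃ P : K[X], (∀ n, P.eval ((p : K) ^ n) = Nat.card (GeneratingTuple A n)) ∧
      ∀ t : K, t ≠ 0 → (∀ i : ℕ, t ≠ (p : K) ^ i) → P.eval t ≠ 0 := by
  induction h : Nat.card A using Nat.strong_induction_on generalizing A with
  | _ m ih =>
    have := Fact.mk hp
    rcases subsingleton_or_nontrivial A with hs | hnt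
    · refine ⟨1, fun n => ?_, by simp⟩
      have : Unique (GeneratingTuple A n) :=
        ⟨⟨⟨1, Subsingleton.elim _ _⟩⟩, fun _ => Subsingleton.elim _ _⟩
      simp
    · have hdvd : p ∣ Nat.card A := by
        obtain ⟨k, hk, h⟩ := hA.nontrivial_iff_card.mp hnt
        exact h ▸ dvd_pow_self p hk.ne'
      obtain ⟨g, hg⟩ := exists_prime_orderOf_dvd_card' p hdvd
      let π := QuotientGroup.mk' (Subgroup.zpowers g)
      have hN : Nat.card π.ker = p := by
        rw [QuotientGroup.ker_mk', Nat.card_zpowers, hg]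
      have hlt : Nat.card (A ⧸ Subgroup.zpowers g) < m := by
        rw [← h, Subgroup.card_eq_card_quotient_mul_card_subgroup (Subgroup.zpowers g),
          Nat.card_zpowers, hg]
        exact lt_mul_of_one_lt_right Nat.card_pos hp.one_lt
      obtain ⟨P, hP, hP'⟩ := ih _ hlt (A ⧸ Subgroup.zpowers g) (hA.to_quotient _) rfl
      refine ⟨P * (X - C (Nat.card (HomSection π) : K)), fun n => ?_, fun t ht0 ht => ?_⟩
      · have := congrArg (Nat.cast (R := K))
          (card_generatingTuple_add hp π (QuotientGroup.mk'_surjective _) hN n)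
        push_cast at this
        simp only [eval_mul, eval_sub, eval_X, eval_C, hP]
        linear_combination -this
      · simp only [eval_mul, eval_sub, eval_X, eval_C]
        refine mul_ne_zero (hP' t ht0 ht) (sub_ne_zero.mpr ?_)
        rcases card_homSection hp π hN with h | ⟨k, h⟩
        · simpa [h] using ht0
        · simpa [h] using ht k

/-- Tuples in `G` generating the subgroup `C` are generating tuples of `C`. -/
def closureRangeEqEquiv {G : Type*} [Group G] (C : Subgroup G) (n : ℕ) :
    {x : Fin n → G // Subgroup.closure (Set.range x) = C} ≃ GeneratingTuple C n where
  toFun x := ⟨fun i => ⟨x.1 i, x.2.le (Subgroup.subset_closure (Set.mem_range_self i))⟩, by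
    apply Subgroup.map_injective C.subtype_injective
    rw [MonoidHom.map_closure, ← Set.range_comp, ← MonoidHom.range_eq_map, Subgroup.range_subtype]
    exact x.2⟩
  invFun x := ⟨fun i => x.1 i, by
    have := congrArg (Subgroup.map C.subtype) x.2
    rw [MonoidHom.map_closure, ← Set.range_comp, ← MonoidHom.range_eq_map,
      Subgroup.range_subtype] at this
    exact this⟩
  left_inv _ := rfl
  right_inv _ := rfl

open Classical in
theorem card_pow_eq_sum_card_generatingTuple {G : Type*} [Group G] [Finite G]
    [Fintype (Subgroup G)] (A : Subgroup G) (n : ℕ) :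
    Nat.card A ^ n = ∑ C : Subgroup G, if C ≤ A then Nat.card (GeneratingTuple C n) else 0 := by
  have hsum : Nat.card A ^ n = ∑ C : {C : Subgroup G // C ≤ A},
      Nat.card (GeneratingTuple C.1 n) := by
    rw [← Nat.card_sigma, ← Nat.card_fin n, ← Nat.card_fun, Nat.card_fin]
    have hmem (x : Fin n → G) : (∀ i, x i ∈ A) ↔ Subgroup.closure (Set.range x) ≤ A := by
      rw [Subgroup.closure_le, Set.range_subset_iff]; rfl
    refine Nat.card_congr (((Equiv.subtypePiEquivPi (p := fun _ a => a ∈ A)).symm.trans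
      (Equiv.subtypeEquivRight hmem)).trans ?_)
    refine (Equiv.sigmaSubtypeFiberEquivSubtype
      (fun x : Fin n → G => Subgroup.closure (Set.range x)) (q := (· ≤ A)) (fun _ => Iff.rfl)).symm.trans ?_
    exact Equiv.sigmaCongrRight fun C => closureRangeEqEquiv C.1 n
  rw [hsum, ← Finset.sum_filter]
  exact (Finset.sum_subtype _ (by simp) fun C : Subgroup G => Nat.card (GeneratingTuple C n)).symm

open Classical in
/-- The zeta matrix of a finite partial order is invertible. -/
theorem det_zeta_ne_zero (L K : Type*) [PartialOrder L] [Fintype L] [DecidableEq L] [Field K] :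
    (Matrix.of fun a b : L => if b ≤ a then (1 : K) else 0).det ≠ 0 := by
  intro h
  obtain ⟨v, hv, hzero⟩ := Matrix.exists_mulVec_eq_zero_iff.mpr h
  refine hv (funext fun a => ?_)
  induction a using WellFoundedLT.induction with
  | _ a ih =>
    have ha := congrFun hzero a
    simp only [Matrix.mulVec, dotProduct, Matrix.of_apply] at ha
    rw [Finset.sum_eq_single a] at ha
    · simpa using ha
    · intro b _ hba
      by_cases hle : b ≤ a
      · simp [ih b (lt_of_le_of_ne hle hba)]
      · simp [hle]
    · simp

open Classical in
/-- If `f` is the sum of a nowhere vanishing `g` over lower sets, then the meet matrix of `f` is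
invertible. -/
theorem det_meet_matrix_ne_zero {L K : Type*} [SemilatticeInf L] [Fintype L] [DecidableEq L]
    [Field K] {f g : L → K} (hf : ∀ a, f a = ∑ c, if c ≤ a then g c else 0)
    (hg : ∀ c, g c ≠ 0) : (Matrix.of fun a b : L => f (a ⊓ b)).det ≠ 0 := by
  let Z : Matrix L L K := Matrix.of fun a b => if b ≤ a then 1 else 0
  have hfact : (Matrix.of fun a b : L => f (a ⊓ b)) = Z * Matrix.diagonal g * Z.transpose := by
    ext a b
    rw [Matrix.mul_apply]
    simp only [Matrix.of_apply, hf, Matrix.mul_diagonal, Matrix.transpose_apply, Z, le_inf_iff]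
    refine Finset.sum_congr rfl fun c _ => ?_
    by_cases ha : c ≤ a <;> by_cases hb : c ≤ b <;> simp [ha, hb]
  rw [hfact, Matrix.det_mul, Matrix.det_mul, Matrix.det_transpose, Matrix.det_diagonal]
  exact mul_ne_zero (mul_ne_zero (det_zeta_ne_zero L K) (Finset.prod_ne_zero_iff.mpr
    fun c _ => hg c)) (det_zeta_ne_zero L K)

/-- For a finite abelian `p`-group `G`, a field `K` of characteristic zero and `t ∈ K`
with `t ≠ 0` and `t ≠ p^i` for every `i`, the matrix indexed by pairs of subgroups of
`G` with `(A, B)`-entry `t ^ ℓ(A ⊓ B)`, where `ℓ(H)` is defined by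
`Nat.card H = p ^ ℓ(H)`, has nonzero determinant. -/
theorem det_subgroup_intersection_matrix_ne_zero (p : ℕ) (hp : p.Prime)
    (G : Type*) [CommGroup G] [Finite G] (hG : IsPGroup p G)
    [Fintype (Subgroup G)] [DecidableEq (Subgroup G)]
    (K : Type*) [Field K] [CharZero K] (t : K)
    (ht0 : t ≠ 0) (ht : ∀ i : ℕ, t ≠ (p : K) ^ i) :
    (Matrix.of fun A B : Subgroup G =>
      t ^ ((Nat.card (A ⊓ B : Subgroup G)).factorization p)).det ≠ 0 := by
  classical
  have := Fact.mk hp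
  choose P hP hP' using fun C : Subgroup G =>
    exists_polynomial_card_generatingTuple hp K C (hG.to_subgroup C)
  refine det_meet_matrix_ne_zero
    (f := fun A : Subgroup G => t ^ (Nat.card A).factorization p)
    (g := fun C => (P C).eval t) (fun A => ?_) fun C => hP' C t ht0 ht
  obtain ⟨k, hk⟩ := IsPGroup.iff_card.mp (hG.to_subgroup A)
  have hfac : (Nat.card A).factorization p = k := by simp [hk, hp.factorization_self]
  have hinj : Function.Injective fun n : ℕ => (p : K) ^ n := fun a b hab =>
    Nat.pow_right_injective hp.two_le (Nat.cast_injective (R := K) (by simpa using hab))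
  have hpoly : (X ^ k : K[X]) = ∑ C : Subgroup G, if C ≤ A then P C else 0 := by
    refine Polynomial.eq_of_infinite_eval_eq _ _
      ((Set.infinite_range_of_injective hinj).mono ?_)
    rintro _ ⟨n, rfl⟩
    have h := congrArg (Nat.cast (R := K)) (card_pow_eq_sum_card_generatingTuple A n)
    rw [hk] at h
    push_cast at h
    simp only [Set.mem_ofPred_eq, eval_pow, eval_X, eval_finsetSum, apply_ite (eval _), eval_zero,
      hP, ← h]
    rw [← pow_mul, ← pow_mul, mul_comm]
  have := congrArg (eval t) hpoly
  simpa only [hfac, eval_pow, eval_X, eval_finsetSum, apply_ite (eval _), eval_zero] using this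
end
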